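/- arXiv:1505.04602 — 2 statements merged into one kernel-verified Lean document; each statement's English description precedes it below -/
import Mathlib

section
/- Let n ≥ 2 and let G be a simple graph on Fin n. Then G is bipartite (2-colorable) if and only if for every subset S of the edge set of G with |S| odd, ∑_{e ∈ S} χ(e) ≠ 0 in (Fin (n-1) → ZMod 2). -/
/-- The coding vector of an unordered pair of vertices of `Fin n`:
for `e = {i,j}` with `i < j`, coordinate `k` is `1` iff `i ≤ k < j`. -/
def chi (n : ℕ) : Sym2 (Fin n) → (Fin (n - 1) → ZMod 2) :=
  Sym2.lift ⟨fun i j k => if min i.val j.val ≤ k.val ∧ k.val < max i.val j.val then 1 else 0,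
    fun i j => by funext k; dsimp only; rw [min_comm, max_comm]⟩

/-- `Cseg N` is the set of nonzero vectors of `Fin N → ZMod 2` whose support is an
interval of consecutive indices (the consecutive 1's property). -/
def Cseg (N : ℕ) : Set (Fin N → ZMod 2) :=
  {v | v ≠ 0 ∧ ∃ a b : ℕ, ∀ k : Fin N, v k = 1 ↔ a ≤ k.val ∧ k.val < b}

/-- A finite set of vectors is reduced if it is nonempty and every nonempty proper
subset has nonzero sum. -/
def IsReducedSet {N : ℕ} (S : Finset (Fin N → ZMod 2)) : Prop :=
  S.Nonempty ∧ ∀ A : Finset (Fin N → ZMod 2), A ⊂ S → A.Nonempty → ∑ v ∈ A, v ≠ 0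

def chiP (n : ℕ) (i : Fin n) : Fin (n - 1) → ZMod 2 := fun k => if i.val ≤ k.val then 1 else 0

lemma zmod2_add_self (x : ZMod 2) : x + x = 0 := by revert x; decide

lemma chi_eq (n : ℕ) (i j : Fin n) : chi n s(i, j) = chiP n i + chiP n j := by
  funext k
  simp only [chi, Sym2.lift_mk, chiP, Pi.add_apply]
  have h2 : (1 : ZMod 2) + 1 = 0 := by decide
  by_cases h1 : i.val ≤ k.val <;> by_cases h3 : j.val ≤ k.val <;> simp [h1, h3, h2]

lemma tele (g : ℕ → ZMod 2) (i m : ℕ) :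
    ∑ k ∈ Finset.range m, (if i ≤ k then (1 : ZMod 2) else 0) * (g k + g (k + 1)) =
      if i ≤ m then g i + g m else 0 := by
  induction m with
  | zero =>
    by_cases h : i ≤ 0
    · obtain rfl : i = 0 := by omega
      simp [zmod2_add_self]
    · simp [h]
  | succ m ih =>
    rw [Finset.sum_range_succ, ih]
    by_cases h : i ≤ m
    · have h' : i ≤ m + 1 := by omega
      simp only [h, h', if_true]
      linear_combination zmod2_add_self (g m)
    · by_cases h' : i = m + 1
      · subst h'; simp [zmod2_add_self]
      · have : ¬ i ≤ m + 1 := by omega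
        simp [h, this]

lemma sum_odd {α M : Type*} [DecidableEq α] [AddCommMonoid M] (hM : ∀ x : M, x + x = 0)
    (l : List α) (f : α → M) :
    ∑ e ∈ l.toFinset.filter (fun e => Odd (l.count e)), f e = (l.map f).sum := by
  rw [Finset.sum_list_map_count, Finset.sum_filter]
  refine Finset.sum_congr rfl fun e _ => ?_
  split_ifs with h
  · obtain ⟨k, hk⟩ := h
    rw [hk, add_nsmul, mul_comm, mul_nsmul, two_nsmul, one_nsmul]
    rw [← nsmul_add, hM]; simp
  · obtain ⟨k, hk⟩ := Nat.not_odd_iff_even.1 h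
    rw [hk, add_nsmul, hM]

lemma walk_sum {n : ℕ} {G : SimpleGraph (Fin n)} {u v : Fin n} (p : G.Walk u v) :
    (p.edges.map (chi n)).sum = chiP n u + chiP n v := by
  induction p with
  | nil => funext k; simp [zmod2_add_self]
  | @cons a b c h p ih =>
    rw [SimpleGraph.Walk.edges_cons, List.map_cons, List.sum_cons, ih, chi_eq]
    funext k
    simp only [Pi.add_apply]
    linear_combination zmod2_add_self (chiP n b k)

theorem stmt5 (n : ℕ) (hn : 2 ≤ n) (G : SimpleGraph (Fin n)) :
    G.Colorable 2 ↔
      ∀ S : Finset (Sym2 (Fin n)), ↑S ⊆ G.edgeSet → Odd S.card →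
        ∑ e ∈ S, chi n e ≠ 0 := by
  constructor
  · rintro ⟨c⟩ S hS hodd h0
    let g : ℕ → ZMod 2 := fun k => if h : k < n then (if c ⟨k, h⟩ = 0 then 0 else 1) else 0
    have hg : ∀ i : Fin n, g i = if c i = 0 then 0 else 1 := fun i => by simp [g]
    let L : (Fin (n - 1) → ZMod 2) → ZMod 2 := fun v => ∑ k, v k * (g k + g (k + 1))
    have hP : ∀ i : Fin n, L (chiP n i) = g i + g (n - 1) := by
      intro i
      have := tele g i (n - 1)
      rw [if_pos (by omega)] at this
      rw [← this, ← Fin.sum_univ_eq_sum_range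
        (fun k => (if (i : ℕ) ≤ k then (1 : ZMod 2) else 0) * (g k + g (k + 1)))]
      rfl
    have hadd : ∀ v w, L (v + w) = L v + L w := by
      intro v w
      simp only [L, Pi.add_apply, add_mul, Finset.sum_add_distrib]
    have hL0 : L 0 = 0 := by simp [L]
    let LH : (Fin (n - 1) → ZMod 2) →+ ZMod 2 := ⟨⟨L, hL0⟩, hadd⟩
    have hone : ∀ e ∈ S, LH (chi n e) = 1 := by
      intro e he
      have hadj := hS he
      induction e with | _ i j
      have hne := c.valid ((SimpleGraph.mem_edgeSet G).1 hadj)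
      rw [chi_eq]
      change L _ = 1
      rw [hadd, hP, hP, hg, hg]
      have h2 := zmod2_add_self (g (n - 1))
      have : ∀ a b : Fin 2, a ≠ b →
        ((if a = 0 then 0 else 1) + (if b = 0 then 0 else 1) : ZMod 2) = 1 := by decide
      linear_combination h2 + this _ _ hne
    have := congrArg LH h0
    rw [map_sum, Finset.sum_congr rfl hone, map_zero] at this
    simp only [Finset.sum_const, nsmul_eq_mul, mul_one] at this
    rw [ZMod.natCast_eq_zero_iff_even] at this
    exact (Nat.not_even_iff_odd.2 hodd) this
  · intro H
    rw [SimpleGraph.two_colorable_iff_forall_loop_even]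
    intro u p
    by_contra hp
    refine H (p.edges.toFinset.filter (fun e => Odd (p.edges.count e))) ?_ ?_ ?_
    · intro e he
      simp only [Finset.coe_filter, List.mem_toFinset, Set.mem_ofPred_eq] at he
      exact p.edges_subset_edgeSet he.1
    · have := sum_odd zmod2_add_self p.edges (fun _ => (1 : ZMod 2))
      simp only [Finset.sum_const, nsmul_eq_mul, mul_one, List.map_const', List.sum_replicate,
        SimpleGraph.Walk.length_edges] at this
      rw [← Nat.not_even_iff_odd, ← ZMod.natCast_eq_zero_iff_even, this,
        ZMod.natCast_eq_zero_iff_even]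
      exact hp
    · rw [sum_odd (fun x => by funext k; exact zmod2_add_self _), walk_sum]
      funext k
      exact zmod2_add_self _
end

section
/- Let n ≥ 2, let G be a simple graph on Fin n, and let X be any subset of the edge set of G. Then the spanning subgraph of G with edge set X is acyclic (contains no cycle) if and only if the family of vectors (χ(e))_{e ∈ X} is linearly independent over ZMod 2 in (Fin (n-1) → ZMod 2). (Hence the cycle matroid of G is isomorphic to the column matroid of its coding sequence.) -/
/-- Potential of a vertex (indicator of an initial segment). -/
def pot (n : ℕ) (i : ℕ) : Fin (n - 1) → ZMod 2 := fun k => if k.val < i then 1 else 0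

lemma chi_mk (n : ℕ) (i j : Fin n) : chi n s(i, j) = pot n i.val + pot n j.val := by
  funext k
  have h2 : (1 : ZMod 2) + 1 = 0 := by decide
  simp only [chi, pot, Sym2.lift_mk, Pi.add_apply]
  split_ifs <;> first | omega | simp [h2]

lemma sum_pot (n : ℕ) (c : ℕ → ZMod 2) (i : ℕ) (hi : i < n) :
    ∑ k : Fin (n - 1), pot n i k * (c (k.val + 1) - c k.val) = c i - c 0 := by
  rw [← Finset.sum_range_sub c i]
  simp only [pot]
  rw [Fin.sum_univ_eq_sum_range
    (fun k => (if k < i then (1 : ZMod 2) else 0) * (c (k + 1) - c k)) (n - 1)]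
  simp only [ite_mul, one_mul, zero_mul]
  rw [← Finset.sum_filter]
  congr 1
  ext k
  simp only [Finset.mem_filter, Finset.mem_range]
  omega

lemma exists_functional (n : ℕ) (c : Fin n → ZMod 2) :
    ∃ φ : (Fin (n - 1) → ZMod 2) →ₗ[ZMod 2] ZMod 2,
      ∀ i j : Fin n, φ (chi n s(i, j)) = c i + c j := by
  let d : ℕ → ZMod 2 := fun m => if h : m < n then c ⟨m, h⟩ else 0
  refine ⟨∑ k : Fin (n - 1), (d (k.val + 1) - d k.val) • LinearMap.proj k, fun i j => ?_⟩
  have hp : ∀ i : Fin n, (∑ k : Fin (n - 1), (d (k.val + 1) - d k.val) •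
      (LinearMap.proj k : (Fin (n - 1) → ZMod 2) →ₗ[ZMod 2] ZMod 2)) (pot n i.val)
        = c i - d 0 := by
    intro i
    have := sum_pot n d i.val i.isLt
    simp only [LinearMap.sum_apply, LinearMap.smul_apply, LinearMap.proj_apply, smul_eq_mul]
    rw [show c i = d i.val by simp [d], ← this]
    exact Finset.sum_congr rfl fun k _ => mul_comm _ _
  rw [chi_mk, map_add, hp, hp]
  generalize c i = a, c j = b, d 0 = e
  revert a b e
  decide

lemma mem_span_iff (n : ℕ) (Y : Set (Sym2 (Fin n))) (u v : Fin n) :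
    chi n s(u, v) ∈ Submodule.span (ZMod 2) (chi n '' Y) ↔
      (SimpleGraph.fromEdgeSet Y).Reachable u v := by
  constructor
  · intro h
    classical
    by_contra hr
    obtain ⟨φ, hφ⟩ := exists_functional n
      (fun x => if (SimpleGraph.fromEdgeSet Y).Reachable u x then 1 else 0)
    have hle : Submodule.span (ZMod 2) (chi n '' Y) ≤ LinearMap.ker φ := by
      rw [Submodule.span_le]
      rintro _ ⟨e, he, rfl⟩
      induction e with
      | h a b =>
        have hab : (SimpleGraph.fromEdgeSet Y).Reachable a b := by
          by_cases hne : a = b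
          · subst hne; exact SimpleGraph.Reachable.refl _
          · exact SimpleGraph.Adj.reachable ((SimpleGraph.fromEdgeSet_adj _).2 ⟨he, hne⟩)
        have h2 : (1 : ZMod 2) + 1 = 0 := by decide
        have hiff : (SimpleGraph.fromEdgeSet Y).Reachable u a ↔
            (SimpleGraph.fromEdgeSet Y).Reachable u b :=
          ⟨fun h => h.trans hab, fun h => h.trans hab.symm⟩
        simp only [SetLike.mem_coe, LinearMap.mem_ker, hφ, hiff]
        split_ifs <;> simp [h2]
    have := hle h
    rw [LinearMap.mem_ker, hφ] at this
    simp [hr] at this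
  · rintro ⟨w⟩
    have h0 : ∀ x : Fin (n - 1) → ZMod 2, x + x = 0 := fun x => by
      funext k; exact CharTwo.add_self_eq_zero _
    induction w with
    | nil => rw [chi_mk, h0]; exact Submodule.zero_mem _
    | @cons a b c hab _ ih =>
      have h1 : chi n s(a, b) ∈ Submodule.span (ZMod 2) (chi n '' Y) :=
        Submodule.subset_span ⟨_, ((SimpleGraph.fromEdgeSet_adj _).1 hab).1, rfl⟩
      have := Submodule.add_mem _ h1 ih
      rw [chi_mk, chi_mk] at this
      rw [chi_mk]
      convert this using 1
      rw [add_assoc, ← add_assoc (pot n b.val), h0, zero_add]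

theorem stmt11 (n : ℕ) (hn : 2 ≤ n) (G : SimpleGraph (Fin n))
    (X : Set (Sym2 (Fin n))) (hX : X ⊆ G.edgeSet) :
    (SimpleGraph.fromEdgeSet X).IsAcyclic ↔
      LinearIndependent (ZMod 2) (fun e : X => chi n e.val) := by
  rw [SimpleGraph.isAcyclic_iff_forall_isBridge, linearIndependent_iff_notMem_span]
  have himg : ∀ e : X, (fun e : X => chi n e.val) '' (Set.univ \ {e}) = chi n '' (X \ {e.val}) := by
    rintro ⟨e, he⟩
    ext x
    simp only [Set.mem_image, Set.mem_diff, Set.mem_univ, true_and, Set.mem_singleton_iff,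
      Subtype.exists, Subtype.mk.injEq]
    constructor
    · rintro ⟨a, ha, hne, rfl⟩; exact ⟨a, ⟨ha, hne⟩, rfl⟩
    · rintro ⟨a, ⟨ha, hne⟩, rfl⟩; exact ⟨a, ha, hne, rfl⟩
  have hgr : ∀ e, (SimpleGraph.fromEdgeSet X).deleteEdges {e} =
      SimpleGraph.fromEdgeSet (X \ {e}) := by
    intro e
    ext a b
    simp only [SimpleGraph.deleteEdges_adj, SimpleGraph.fromEdgeSet_adj, Set.mem_diff]
    tauto
  have key : ∀ e : Sym2 (Fin n), (SimpleGraph.fromEdgeSet X).IsBridge e ↔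
      chi n e ∉ Submodule.span (ZMod 2) (chi n '' (X \ {e})) := by
    intro e
    induction e with
    | h a b => rw [mem_span_iff, SimpleGraph.isBridge_iff, ← hgr]
  constructor
  · intro h e
    rw [himg]
    refine (key _).1 (h ?_)
    rw [SimpleGraph.edgeSet_fromEdgeSet]
    exact ⟨e.2, G.not_isDiag_of_mem_edgeSet (hX e.2)⟩
  · intro h e he
    rw [SimpleGraph.edgeSet_fromEdgeSet] at he
    have := h ⟨e, he.1⟩
    rw [himg] at this
    exact (key e).2 this
end
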